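/- arXiv:0812.1276 — 2 statements merged into one kernel-verified Lean document; each statement's English description precedes it below -/
import Mathlib

section
/- Every infinite prime graph that contains no infinite clique contains an induced subgraph isomorphic to at least one of the graphs G0, G1, G2, G3. -/
set_option autoImplicit false

/-- A set of vertices is autonomous if every vertex outside it is adjacent
either to all of its elements or to none of them. -/
def Autonomous {V : Type*} (G : SimpleGraph V) (A : Set V) : Prop :=
  ∀ v ∉ A, (∀ a ∈ A, G.Adj v a) ∨ (∀ a ∈ A, ¬ G.Adj v a)

/-- A graph is prime if it has more than three vertices and its only
autonomous sets are the trivial ones. -/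
def PrimeGraph {V : Type*} (G : SimpleGraph V) : Prop :=
  3 < Cardinal.mk V ∧
    ∀ A : Set V, Autonomous G A → A = ∅ ∨ (∃ x, A = {x}) ∨ A = Set.univ

/-- The bipartite graph `G0` on `A ∪ B` (`A, B` the two copies of `ℕ`),
with an edge `{a_i, b_j}` iff `i ≠ j`. -/
def G0 : SimpleGraph (ℕ ⊕ ℕ) :=
  SimpleGraph.fromRel (fun u v => ∃ i j : ℕ, u = Sum.inl i ∧ v = Sum.inr j ∧ i ≠ j)

/-- The bipartite graph `G1` (half complete bipartite graph),
with an edge `{a_i, b_j}` iff `i < j`. -/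
def G1 : SimpleGraph (ℕ ⊕ ℕ) :=
  SimpleGraph.fromRel (fun u v => ∃ i j : ℕ, u = Sum.inl i ∧ v = Sum.inr j ∧ i < j)

/-- The one-way infinite path `G2`, with an edge `{a_i, b_j}` iff `j = i` or `j = i + 1`. -/
def G2 : SimpleGraph (ℕ ⊕ ℕ) :=
  SimpleGraph.fromRel (fun u v =>
    ∃ i j : ℕ, u = Sum.inl i ∧ v = Sum.inr j ∧ (j = i ∨ j = i + 1))

/-- The graph `G3`: countably many disjoint edges `{a_i, b_i}` together with an
extra vertex `c` (here `none`) adjacent to every `b_i`. -/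
def G3 : SimpleGraph (Option (ℕ ⊕ ℕ)) :=
  SimpleGraph.fromRel (fun u v =>
    (∃ i : ℕ, u = some (Sum.inl i) ∧ v = some (Sum.inr i)) ∨
    (∃ i : ℕ, u = none ∧ v = some (Sum.inr i)))

/-!
Call a set of vertices extendable if each of its finite subsets is a clique with infinitely many
common neighbors, and let `K` be a maximal extendable set. As `G` has no infinite clique, `K` is
finite; let `W` be its common neighborhood. By maximality `G[W]` is locally finite, so an infinite
component of `G[W]` contains an induced ray, which is `G2`.

Otherwise `G[W]` has infinitely many components, all finite. A nontrivial one is not autonomous, so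
a vertex outside `W` separates the ends of one of its edges; likewise any two trivial ones are
separated by a vertex outside `W`. If one separating vertex separates the ends of infinitely many
of the chosen edges, it is the apex of a `G3`. If not, Ramsey's theorem makes the adjacency between
infinitely many separating vertices `d i` and vertices `a j` of `W` one of `i ≠ j`, `i < j`,
`j ≤ i`, `i = j`. The first three give `G0`, `G1`, `G1`. In the last one, a vertex of the finite set
`K` is nonadjacent to infinitely many `d i` and, like all of `K`, adjacent to every `a j`: it is the
apex of a `G3`.
-/

open Filter Function

section Ramsey

lemma exists_eventually_eq_const {α κ : Type*} [Finite κ] (U : Ultrafilter α) (f : α → κ) :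
    ∃ k, ∀ᶠ i in (U : Filter α), f i = k :=
  Ultrafilter.eventually_exists_iff.1 (Eventually.of_forall fun i => ⟨f i, rfl⟩)

lemma exists_strictMono_monochromatic {κ : Type*} [Finite κ] (c : ℕ → ℕ → κ) :
    ∃ g : ℕ → ℕ, StrictMono g ∧ ∃ k, ∀ i j, i < j → c (g i) (g j) = k := by
  choose limit hlimit using fun i => exists_eventually_eq_const (hyperfilter ℕ) (c i)
  obtain ⟨k, hk⟩ := exists_eventually_eq_const (hyperfilter ℕ) limit
  obtain ⟨g, -, hg⟩ := exists_seq_of_forall_finset_exists (fun i => limit i = k)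
    (fun i j => i < j ∧ c i j = k) fun s hs => by
      have hext : ∀ᶠ j in (hyperfilter ℕ : Filter ℕ), ∀ i ∈ s, i < j ∧ c i j = k :=
        (Finset.eventually_all s).2 fun i hi =>
          Eventually.and (Nat.hyperfilter_le_atTop (eventually_gt_atTop i)) (hs i hi ▸ hlimit i)
      exact (hk.and hext).exists
  exact ⟨g, fun i j hij => (hg i j hij).1, k, fun i j hij => (hg i j hij).2⟩

lemma exists_strictMono_const {κ : Type*} [Finite κ] (f : ℕ → κ) :
    ∃ g : ℕ → ℕ, StrictMono g ∧ ∃ k, ∀ i, f (g i) = k := by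
  obtain ⟨g, hg, k, hk⟩ := exists_strictMono_monochromatic fun i _ => f i
  exact ⟨g, hg, k, fun i => hk i (i + 1) i.lt_succ_self⟩

lemma exists_strictMono_ne_or_lt_or_ge_or_eq (R : ℕ → ℕ → Prop)
    (hR : ∀ i j, i < j → (R i j ↔ ¬ R i i)) :
    ∃ g : ℕ → ℕ, StrictMono g ∧
      ((∀ i j, R (g i) (g j) ↔ i ≠ j) ∨ (∀ i j, R (g i) (g j) ↔ i < j) ∨
        (∀ i j, R (g i) (g j) ↔ j ≤ i) ∨ ∀ i j, R (g i) (g j) ↔ i = j) := by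
  obtain ⟨g, hg, ⟨diag, below⟩, hcol⟩ :=
    exists_strictMono_monochromatic fun i j => (R i i, R j i)
  simp only [Prod.mk.injEq, eq_iff_iff] at hcol
  have hdiag (i) : R (g i) (g i) ↔ diag := (hcol i (i + 1) i.lt_succ_self).1
  have hbelow (i j) (hij : j < i) : R (g i) (g j) ↔ below := (hcol j i hij).2
  have habove (i j) (hij : i < j) : R (g i) (g j) ↔ ¬ diag := by
    rw [hR _ _ (hg hij), hdiag]
  refine ⟨g, hg, ?_⟩
  have htri (s : ℕ → ℕ → Prop) (hlt : ∀ i j, i < j → (s i j ↔ ¬ diag))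
      (heq : ∀ i, s i i ↔ diag) (hgt : ∀ i j, j < i → (s i j ↔ below)) (i j) :
      R (g i) (g j) ↔ s i j := by
    rcases lt_trichotomy i j with hij | rfl | hij
    · rw [habove i j hij, hlt i j hij]
    · rw [hdiag, heq]
    · rw [hbelow i j hij, hgt i j hij]
  by_cases hd : diag <;> by_cases hb : below
  · exact .inr (.inr (.inl (htri _ (by grind) (by grind) (by grind))))
  · exact .inr (.inr (.inr (htri _ (by grind) (by grind) (by grind))))
  · exact .inl (htri _ (by grind) (by grind) (by grind))
  · exact .inr (.inl (htri _ (by grind) (by grind) (by grind)))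

/- Along a nonprincipal ultrafilter on `T` every `d` has a limit truth value, and at most one `t`
agrees with the limits of all `d`. -/
lemma exists_seq_iff_not_diag {D T : Type*} [Infinite T] (r : D → T → Prop)
    (hr : Injective (flip r)) :
    ∃ (d : ℕ → D) (t : ℕ → T), ∀ i j, i < j → (r (d i) (t j) ↔ ¬ r (d i) (t i)) := by
  let limit (d : D) : Prop := ∀ᶠ t in (hyperfilter T : Filter T), r d t
  have hlimit (d : D) : ∀ᶠ t in (hyperfilter T : Filter T), r d t ↔ limit d := by
    by_cases hd : limit d
    · exact hd.mono fun t ht => iff_of_true ht hd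
    · exact (Ultrafilter.eventually_not.2 hd).mono fun t ht => iff_of_false ht hd
  have hatypical : ∀ᶠ t in (hyperfilter T : Filter T), ∃ d, r d t ↔ ¬ limit d := by
    have hfin : {t | flip r t = limit}.Finite :=
      Set.Subsingleton.finite fun s hs t ht => hr (hs.trans ht.symm)
    filter_upwards [compl_mem_hyperfilter_of_finite hfin] with t ht
    obtain ⟨d, hd⟩ := Function.ne_iff.1 ht
    have hd : ¬ (r d t ↔ limit d) := fun h => hd (propext h)
    exact ⟨d, by tauto⟩
  obtain ⟨f, hf, hsep⟩ := exists_seq_of_forall_finset_exists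
    (fun x : D × T => r x.1 x.2 ↔ ¬ limit x.1) (fun x y => r x.1 y.2 ↔ limit x.1) fun s _ => by
      have hext : ∀ᶠ t in (hyperfilter T : Filter T), ∀ x ∈ s, r x.1 t ↔ limit x.1 :=
        (Finset.eventually_all s).2 fun x _ => hlimit x.1
      obtain ⟨t, ⟨d, hd⟩, ht⟩ := (hatypical.and hext).exists
      exact ⟨(d, t), hd, ht⟩
  exact ⟨fun i => (f i).1, fun i => (f i).2, fun i j hij => by rw [hsep i j hij, hf i, not_not]⟩

end Ramsey

section BipartitePatterns

variable {V : Type*} {G : SimpleGraph V}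

/-- The bipartite graph of a relation `r`. The graphs `G0` and `G1` are by definition
`bipartiteGraph (· ≠ ·)` and `bipartiteGraph (· < ·)`. -/
def bipartiteGraph {ι κ : Type*} (r : ι → κ → Prop) : SimpleGraph (ι ⊕ κ) :=
  SimpleGraph.fromRel (fun u v => ∃ i j, u = Sum.inl i ∧ v = Sum.inr j ∧ r i j)

/-- The families `a` and `b` induce in `G` the bipartite graph of `r`, except that repetitions
in either family are allowed. -/
structure InducesBipartite {ι κ : Type*} (G : SimpleGraph V) (r : ι → κ → Prop)
    (a : ι → V) (b : κ → V) : Prop where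
  not_adj_left : ∀ i j, ¬ G.Adj (a i) (a j)
  not_adj_right : ∀ i j, ¬ G.Adj (b i) (b j)
  adj_iff : ∀ i j, G.Adj (a i) (b j) ↔ r i j

namespace InducesBipartite

variable {ι κ ι' κ' : Type*} {r : ι → κ → Prop} {a : ι → V} {b : κ → V}

lemma swap (h : InducesBipartite G r a b) : InducesBipartite G (flip r) b a :=
  ⟨h.not_adj_right, h.not_adj_left, fun i j => by rw [G.adj_comm, h.adj_iff, flip]⟩

lemma comp (h : InducesBipartite G r a b) {s : ι' → κ' → Prop} (f : ι' → ι) (g : κ' → κ)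
    (hrs : ∀ i j, r (f i) (g j) ↔ s i j) : InducesBipartite G s (a ∘ f) (b ∘ g) :=
  ⟨fun _ _ => h.not_adj_left _ _, fun _ _ => h.not_adj_right _ _,
    fun i j => (h.adj_iff _ _).trans (hrs i j)⟩

lemma injective_left (h : InducesBipartite G r a b) (hr : Injective r) : Injective a :=
  fun i j hij => hr <| funext fun k => propext <| by rw [← h.adj_iff, ← h.adj_iff, hij]

lemma injective_sumElim (h : InducesBipartite G r a b) (hrow : Injective r)
    (hcol : Injective (flip r)) (hne : ∀ i, ∃ j, r i j) : Injective (Sum.elim a b) := by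
  refine (h.injective_left hrow).sumElim (h.swap.injective_left hcol) fun i j hij => ?_
  obtain ⟨k, hk⟩ := hne i
  exact h.not_adj_right j k (hij ▸ (h.adj_iff i k).2 hk)

lemma adj_sumElim (h : InducesBipartite G r a b) (u v : ι ⊕ κ) :
    G.Adj (Sum.elim a b u) (Sum.elim a b v) ↔ (bipartiteGraph r).Adj u v := by
  rcases u with i | i <;> rcases v with j | j
  · simp [bipartiteGraph, h.not_adj_left]
  · simp [bipartiteGraph, h.adj_iff]
  · simp [bipartiteGraph, G.adj_comm (b i), h.adj_iff]
  · simp [bipartiteGraph, h.not_adj_right]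

lemma nonempty_embedding (h : InducesBipartite G r a b) (hrow : Injective r)
    (hcol : Injective (flip r)) (hne : ∀ i, ∃ j, r i j) : Nonempty (bipartiteGraph r ↪g G) :=
  ⟨⟨⟨Sum.elim a b, h.injective_sumElim hrow hcol hne⟩, h.adj_sumElim _ _⟩⟩

end InducesBipartite

variable {a b : ℕ → V}

lemma nonempty_G0_embedding (h : InducesBipartite G (· ≠ ·) a b) : Nonempty (G0 ↪g G) :=
  h.nonempty_embedding (fun i j hij => by simpa using congrFun hij j)
    (fun i j hij => by simpa [flip] using congrFun hij i) fun i => ⟨i + 1, by simp⟩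

lemma nonempty_G1_embedding (h : InducesBipartite G (· < ·) a b) : Nonempty (G1 ↪g G) :=
  h.nonempty_embedding
    (fun _ _ hij => eq_of_forall_gt_iff fun k => iff_of_eq (congrFun hij k))
    (fun _ _ hij => eq_of_forall_lt_iff fun k => iff_of_eq (congrFun hij k)) exists_gt

lemma nonempty_G3_embedding (h : InducesBipartite G (· = ·) a b) {c : V}
    (hca : ∀ i, ¬ G.Adj c (a i)) (hcb : ∀ i, G.Adj c (b i)) : Nonempty (G3 ↪g G) := by
  have hinj : Injective (Sum.elim a b) :=
    h.injective_sumElim (fun i j hij => by simpa using congrFun hij j)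
      (fun i j hij => by simpa [flip] using congrFun hij i) fun i => ⟨i, rfl⟩
  have hc : c ∉ Set.range (Sum.elim a b) := by
    rintro ⟨i | i, rfl⟩
    · exact i.succ_ne_self ((h.adj_iff i (i + 1)).1 (hcb (i + 1))).symm
    · exact G.irrefl (hcb i)
  refine ⟨⟨Embedding.optionElim ⟨Sum.elim a b, hinj⟩ c hc, fun {u v} => ?_⟩⟩
  rcases u with _ | i | i <;> rcases v with _ | j | j <;>
    simp [G3, hca, hcb, h.adj_iff, h.not_adj_left, h.not_adj_right, G.adj_comm _ c,
      G.adj_comm (b _) (a _), eq_comm]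

end BipartitePatterns

section InducedRay

variable {V : Type*} {G : SimpleGraph V}

lemma nonempty_G2_iso_hasse : Nonempty (G2 ≃g SimpleGraph.hasse ℕ) := by
  refine ⟨⟨(Equiv.sumComm ℕ ℕ).trans Equiv.natSumNatEquivNat, fun {u v} => ?_⟩⟩
  rcases u with i | i <;> rcases v with j | j <;>
    simp [G2, Order.covBy_iff_add_one_eq] <;> omega

lemma nonempty_hasse_nat_embedding_of_dist {r : V} {f : ℕ → V}
    (hadj : ∀ n, G.Adj (f n) (f (n + 1))) (hdist : ∀ n, G.dist r (f n) = n) :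
    Nonempty (SimpleGraph.hasse ℕ ↪g G) := by
  have hinj : Injective f := fun m n hmn => by rw [← hdist m, hmn, hdist]
  refine ⟨⟨⟨f, hinj⟩, fun {m n} => ?_⟩⟩
  simp only [Embedding.coeFn_mk, SimpleGraph.hasse_adj, Order.covBy_iff_add_one_eq]
  constructor
  · intro hmn
    have hne : m ≠ n := fun h => hmn.ne (congrArg f h)
    have := hmn.diff_dist_adj (u := r)
    simp only [hdist] at this
    omega
  · rintro (rfl | rfl)
    · exact hadj m
    · exact (hadj n).symm

/-- The vertices `w` such that some geodesic from `r` to `w` passes through `v`, provided that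
`G` is connected. -/
def geodesicCone (G : SimpleGraph V) (r v : V) : Set V :=
  {w | G.dist r w = G.dist r v + G.dist v w}

lemma geodesicCone_subset (hG : G.Connected) (r v : V) :
    geodesicCone G r v ⊆
      {v} ∪ ⋃ v' ∈ {v' | G.Adj v v' ∧ G.dist r v' = G.dist r v + 1}, geodesicCone G r v' := by
  intro w hw
  obtain ⟨p, hp⟩ := hG.exists_walk_length_eq_dist v w
  cases p with
  | nil => exact .inl rfl
  | @cons _ v' _ hvv' q =>
    have hw : G.dist r w = G.dist r v + G.dist v w := hw
    have hq := SimpleGraph.dist_le q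
    have hvv'_dist : G.dist v v' = 1 := SimpleGraph.dist_eq_one_iff_adj.2 hvv'
    have hrv' := hG.dist_triangle (u := r) (v := v) (w := v')
    have hrw := hG.dist_triangle (u := r) (v := v') (w := w)
    rw [SimpleGraph.Walk.length_cons] at hp
    have hdist : G.dist r v' = G.dist r v + 1 := by omega
    have hcone : w ∈ geodesicCone G r v' := show G.dist r w = _ by omega
    exact .inr (Set.mem_biUnion (show v' ∈ {v' | _} from ⟨hvv', hdist⟩) hcone)

lemma exists_adj_infinite_geodesicCone (hG : G.Connected)
    (hlf : ∀ v, (G.neighborSet v).Finite) {r v : V} (hv : (geodesicCone G r v).Infinite) :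
    ∃ v', G.Adj v v' ∧ G.dist r v' = G.dist r v + 1 ∧ (geodesicCone G r v').Infinite := by
  by_contra! hfin
  refine hv (((Set.finite_singleton v).union (Set.Finite.biUnion ?_ ?_)).subset
    (geodesicCone_subset hG r v))
  · exact (hlf v).subset fun v' hv' => hv'.1
  · exact fun v' hv' => hfin v' hv'.1 hv'.2

lemma nonempty_hasse_nat_embedding_of_connected [Infinite V] (hG : G.Connected)
    (hlf : ∀ v, (G.neighborSet v).Finite) : Nonempty (SimpleGraph.hasse ℕ ↪g G) := by
  obtain ⟨r⟩ := hG.nonempty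
  have hr : (geodesicCone G r r).Infinite := by simpa [geodesicCone] using Set.infinite_univ
  choose next hadj hdist hnext using
    fun v : {v // (geodesicCone G r v).Infinite} => exists_adj_infinite_geodesicCone hG hlf v.2
  let F (v : {v // (geodesicCone G r v).Infinite}) : {v // (geodesicCone G r v).Infinite} :=
    ⟨next v, hnext v⟩
  refine nonempty_hasse_nat_embedding_of_dist (r := r) (f := fun n => (F^[n] ⟨r, hr⟩).1)
    (fun n => ?_) fun n => ?_
  · rw [iterate_succ_apply']
    exact hadj _
  · induction n with
    | zero => simp
    | succ n ih => rw [iterate_succ_apply', hdist, ih]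

lemma nonempty_G2_embedding_of_infinite_component (hlf : ∀ v, (G.neighborSet v).Finite)
    {c : G.ConnectedComponent} (hc : c.supp.Infinite) : Nonempty (G2 ↪g G) := by
  have : Infinite c := hc.to_subtype
  obtain ⟨e⟩ := nonempty_G2_iso_hasse
  obtain ⟨f⟩ := nonempty_hasse_nat_embedding_of_connected c.connected_toSimpleGraph
    fun v => (hlf v).preimage Subtype.val_injective.injOn
  exact ⟨(SimpleGraph.Embedding.induce c.supp).comp (f.comp e.toEmbedding)⟩

end InducedRay

section CommonNeighbors

variable {V : Type*} {G : SimpleGraph V}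

/-- The set of vertices adjacent to every vertex of `K`. -/
def commonNeighborSet (G : SimpleGraph V) (K : Set V) : Set V :=
  {w | ∀ k ∈ K, G.Adj k w}

lemma commonNeighborSet_antitone : Antitone (commonNeighborSet G) :=
  fun _ _ hKL _ hw k hk => hw k (hKL hk)

lemma exists_locallyFinite_commonNeighborSet [Infinite V]
    (hclique : ¬ ∃ S : Set V, S.Infinite ∧ G.IsClique S) :
    ∃ K : Set V, K.Finite ∧ (commonNeighborSet G K).Infinite ∧
      ∀ v, ((G.induce (commonNeighborSet G K)).neighborSet v).Finite := by
  let F : Set (Set V) :=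
    {S | ∀ L ⊆ S, L.Finite → G.IsClique L ∧ (commonNeighborSet G L).Infinite}
  have hF : Order.IsOfFiniteCharacter F := fun S =>
    ⟨fun hS L hLS _ M hML => hS M (hML.trans hLS), fun hS L hLS hL => hS L hLS hL L subset_rfl hL⟩
  have hempty : ∅ ∈ F := by
    rintro L hL -
    obtain rfl := Set.subset_empty_iff.1 hL
    simpa [commonNeighborSet] using Set.infinite_univ
  obtain ⟨K, -, hKF, hmax⟩ := hF.exists_maximal hempty
  have hKclique : G.IsClique K := fun u hu v hv =>
    (hKF {u, v} (Set.pair_subset hu hv) (Set.toFinite _)).1 (by simp) (by simp)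
  have hK : K.Finite := by
    by_contra hinf
    exact hclique ⟨K, hinf, hKclique⟩
  refine ⟨K, hK, (hKF K subset_rfl hK).2, fun v => ?_⟩
  by_contra hv
  have hinf : (commonNeighborSet G (insert (v : V) K)).Infinite := by
    refine (Set.Infinite.image Subtype.val_injective.injOn hv).mono ?_
    rintro _ ⟨w, hvw, rfl⟩ k (rfl | hk)
    · exact hvw
    · exact w.2 k hk
  have hinsert : insert (v : V) K ∈ F := fun L hL _ =>
    ⟨(hKclique.insert fun k hk _ => (v.2 k hk).symm).subset hL,
      hinf.mono (commonNeighborSet_antitone hL)⟩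
  have hvK : (v : V) ∈ K := hmax hinsert (Set.subset_insert _ _) (Set.mem_insert _ _)
  exact G.irrefl (v.2 v hvK)

end CommonNeighbors

section Components

variable {V : Type*} {G : SimpleGraph V}

lemma not_autonomous_iff {A : Set V} :
    ¬ Autonomous G A ↔ ∃ v ∉ A, ∃ x ∈ A, ∃ y ∈ A, G.Adj v x ∧ ¬ G.Adj v y := by
  simp only [Autonomous]
  push Not
  grind

lemma PrimeGraph.subsingleton_of_finite [Infinite V] (hG : PrimeGraph G) {A : Set V}
    (hA : A.Finite) (hauto : Autonomous G A) : A.Subsingleton := by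
  rcases hG.2 A hauto with rfl | ⟨x, rfl⟩ | rfl
  · exact Set.subsingleton_empty
  · exact Set.subsingleton_singleton
  · exact absurd hA Set.infinite_univ

lemma infinite_connectedComponent_of_finite_supp [Infinite V]
    (hfin : ∀ c : G.ConnectedComponent, c.supp.Finite) : Infinite G.ConnectedComponent := by
  by_contra hcomp
  rw [not_infinite_iff_finite] at hcomp
  refine Set.infinite_univ ((Set.finite_iUnion hfin).subset fun v _ => ?_)
  exact Set.mem_iUnion.2 ⟨G.connectedComponentMk v, rfl⟩

lemma exists_adj_split_of_not_autonomous {W : Set V} {c : (G.induce W).ConnectedComponent}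
    (hc : ¬ Autonomous G (Subtype.val '' c.supp)) :
    ∃ p ∈ c.supp, ∃ q ∈ c.supp, ∃ d ∉ W, G.Adj p q ∧ G.Adj d p ∧ ¬ G.Adj d q := by
  obtain ⟨d, hd, _, ⟨x, hx, rfl⟩, _, ⟨y, hy, rfl⟩, hdx, hdy⟩ := not_autonomous_iff.1 hc
  obtain ⟨walk⟩ := c.connected_toSimpleGraph.preconnected ⟨x, hx⟩ ⟨y, hy⟩
  obtain ⟨⟨⟨p, q⟩, hpq⟩, -, hdp, hdq⟩ :=
    walk.exists_boundary_dart {v | G.Adj d (v : W)} hdx hdy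
  refine ⟨p, p.2, q, q.2, d, fun hdW => hd ?_, hpq, hdp, hdq⟩
  have hpd : (G.induce W).Adj p ⟨d, hdW⟩ := G.adj_symm hdp
  exact ⟨⟨d, hdW⟩, c.mem_supp_of_adj_mem_supp p.2 hpd, rfl⟩

end Components

section Unavoidable

variable {V : Type*} {G : SimpleGraph V}

lemma exists_strictMono_not_adj (hclique : ¬ ∃ S : Set V, S.Infinite ∧ G.IsClique S)
    (d : ℕ → V) : ∃ g : ℕ → ℕ, StrictMono g ∧ ∀ i j, ¬ G.Adj (d (g i)) (d (g j)) := by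
  obtain ⟨g, hg, k, hk⟩ := exists_strictMono_monochromatic fun i j => G.Adj (d i) (d j)
  have hadj (i j) (hij : i ≠ j) : G.Adj (d (g i)) (d (g j)) ↔ k := by
    rcases hij.lt_or_gt with hij | hij
    · rw [hk i j hij]
    · rw [G.adj_comm, hk j i hij]
  refine ⟨g, hg, fun i j => ?_⟩
  by_cases hk : k
  · refine absurd ⟨Set.range (d ∘ g), Set.infinite_range_of_injective ?_, ?_⟩ hclique
    · exact fun i j hij => by_contra fun hne => ((hadj i j hne).2 hk).ne hij
    · rintro _ ⟨i, rfl⟩ _ ⟨j, rfl⟩ hne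
      exact (hadj i j fun hij => hne (congrArg _ hij)).2 hk
  · rcases eq_or_ne i j with rfl | hij
    · exact G.irrefl
    · rwa [hadj i j hij]

variable {K : Set V}

lemma nonempty_embedding_of_adj_iff_not_diag
    (hclique : ¬ ∃ S : Set V, S.Infinite ∧ G.IsClique S) (hK : K.Finite) {a d : ℕ → V}
    (haK : ∀ i, a i ∈ commonNeighborSet G K) (haa : ∀ i j, ¬ G.Adj (a i) (a j))
    (hdK : ∀ i, d i ∉ commonNeighborSet G K)
    (hda : ∀ i j, i < j → (G.Adj (d i) (a j) ↔ ¬ G.Adj (d i) (a i))) :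
    Nonempty (G0 ↪g G) ∨ Nonempty (G1 ↪g G) ∨ Nonempty (G3 ↪g G) := by
  obtain ⟨f, hf, hdd⟩ := exists_strictMono_not_adj hclique d
  obtain ⟨g, -, hpattern⟩ := exists_strictMono_ne_or_lt_or_ge_or_eq
    (fun i j => G.Adj (d (f i)) (a (f j))) fun i j hij => hda _ _ (hf hij)
  have hinduces {r : ℕ → ℕ → Prop} (hr : ∀ i j, G.Adj (d (f (g i))) (a (f (g j))) ↔ r i j) :
      InducesBipartite G r (d ∘ f ∘ g) (a ∘ f ∘ g) :=
    ⟨fun _ _ => hdd _ _, fun _ _ => haa _ _, hr⟩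
  rcases hpattern with hne | hlt | hge | heq
  · exact .inl (nonempty_G0_embedding (hinduces hne))
  · exact .inr (.inl (nonempty_G1_embedding (hinduces hlt)))
  · exact .inr (.inl (nonempty_G1_embedding
      ((hinduces hge).swap.comp Nat.succ id fun _ _ => Nat.succ_le_iff)))
  · simp only [commonNeighborSet, Set.mem_ofPred_eq, not_forall] at hdK
    choose k hkK hkd using hdK
    have : Finite K := hK
    obtain ⟨h, hh, c, hc⟩ :=
      exists_strictMono_const fun i => (⟨k (f (g i)), hkK _⟩ : K)
    refine .inr (.inr (nonempty_G3_embedding (c := (c : V)) ((hinduces heq).comp h h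
      fun i j => hh.injective.eq_iff) (fun i => ?_) fun i => haK _ c c.2))
    rw [← hc i]
    exact hkd _

lemma nonempty_embedding_of_isolated (hpair : ∀ s t, Autonomous G {s, t} → s = t)
    (hclique : ¬ ∃ S : Set V, S.Infinite ∧ G.IsClique S) (hK : K.Finite)
    {T : Set V} (hT : T.Infinite) (hTK : T ⊆ commonNeighborSet G K)
    (hiso : ∀ t ∈ T, ∀ w ∈ commonNeighborSet G K, ¬ G.Adj w t) :
    Nonempty (G0 ↪g G) ∨ Nonempty (G1 ↪g G) ∨ Nonempty (G3 ↪g G) := by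
  have : Infinite T := hT.to_subtype
  have hsep : Injective (flip fun (d : V) (t : T) => G.Adj d t) := by
    intro s t hst
    have hauto : Autonomous G {(s : V), (t : V)} := by
      by_contra hauto
      obtain ⟨d, -, x, hx, y, hy, hdx, hdy⟩ := not_autonomous_iff.1 hauto
      have := congrFun hst d
      simp only [flip, eq_iff_iff] at this
      grind
    exact Subtype.ext (hpair s t hauto)
  obtain ⟨d, t, hdt⟩ := exists_seq_iff_not_diag _ hsep
  refine nonempty_embedding_of_adj_iff_not_diag hclique hK (fun i => hTK (t i).2)
    (fun i j => hiso _ (t j).2 _ (hTK (t i).2)) (fun i hi => ?_) hdt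
  have := hdt i (i + 1) i.lt_succ_self
  exact hiso _ (t (i + 1)).2 _ hi (this.2 (hiso _ (t i).2 _ hi))

lemma nonempty_embedding_of_split_matching
    (hclique : ¬ ∃ S : Set V, S.Infinite ∧ G.IsClique S) (hK : K.Finite) {p q d : ℕ → V}
    (hpK : ∀ i, p i ∈ commonNeighborSet G K) (hqK : ∀ i, q i ∈ commonNeighborSet G K)
    (hdK : ∀ i, d i ∉ commonNeighborSet G K) (hpq : InducesBipartite G (· = ·) p q)
    (hdp : ∀ i, G.Adj (d i) (p i)) (hdq : ∀ i, ¬ G.Adj (d i) (q i)) :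
    Nonempty (G0 ↪g G) ∨ Nonempty (G1 ↪g G) ∨ Nonempty (G3 ↪g G) := by
  obtain ⟨g, hg, ⟨toP, toQ⟩, hcol⟩ :=
    exists_strictMono_monochromatic fun i j => (G.Adj (d i) (p j), G.Adj (d i) (q j))
  simp only [Prod.mk.injEq, eq_iff_iff] at hcol
  have hP (i j) (hij : i < j) : G.Adj (d (g i)) (p (g j)) ↔ toP := (hcol i j hij).1
  have hQ (i j) (hij : i < j) : G.Adj (d (g i)) (q (g j)) ↔ toQ := (hcol i j hij).2
  have htail : InducesBipartite G (· = ·) (p ∘ g ∘ Nat.succ) (q ∘ g ∘ Nat.succ) :=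
    hpq.comp _ _ fun _ _ => (hg.injective.comp Nat.succ_injective).eq_iff
  by_cases hp : toP <;> by_cases hq : toQ
  · exact nonempty_embedding_of_adj_iff_not_diag hclique hK (fun i => hqK (g i))
      (fun _ _ => hpq.not_adj_right _ _) (fun i => hdK (g i))
      fun i j hij => iff_of_true ((hQ i j hij).2 hq) (hdq _)
  · exact .inr (.inr (nonempty_G3_embedding (c := d (g 0))
      (htail.swap.comp id id fun _ _ => eq_comm)
      (fun i => (hQ 0 _ i.succ_pos).not.2 hq) fun i => (hP 0 _ i.succ_pos).2 hp))
  · exact .inr (.inr (nonempty_G3_embedding (c := d (g 0)) htail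
      (fun i => (hP 0 _ i.succ_pos).not.2 hp) fun i => (hQ 0 _ i.succ_pos).2 hq))
  · exact nonempty_embedding_of_adj_iff_not_diag hclique hK (fun i => hpK (g i))
      (fun _ _ => hpq.not_adj_left _ _) (fun i => hdK (g i))
      fun i j hij => iff_of_false ((hP i j hij).not.2 hp) (not_not.2 (hdp _))

lemma nonempty_embedding_of_trivial_components (hpair : ∀ s t, Autonomous G {s, t} → s = t)
    (hclique : ¬ ∃ S : Set V, S.Infinite ∧ G.IsClique S) (hK : K.Finite)
    (hcomp : {c : (G.induce (commonNeighborSet G K)).ConnectedComponent |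
      c.supp.Subsingleton}.Infinite) :
    Nonempty (G0 ↪g G) ∨ Nonempty (G1 ↪g G) ∨ Nonempty (G3 ↪g G) := by
  choose x hx using fun c : (G.induce (commonNeighborSet G K)).ConnectedComponent =>
    c.nonempty_supp
  have hinj : Injective x := fun c c' h =>
    SimpleGraph.ConnectedComponent.eq_of_common_vertex (hx c) (h ▸ hx c')
  refine nonempty_embedding_of_isolated hpair hclique hK
    (hcomp.image (Subtype.val_injective.comp hinj).injOn) ?_ ?_
  · rintro _ ⟨c, -, rfl⟩
    exact (x c).2
  · rintro _ ⟨c, hc, rfl⟩ w hw hadj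
    have hadj' : (G.induce (commonNeighborSet G K)).Adj (x c) ⟨w, hw⟩ := G.adj_symm hadj
    exact hadj'.ne (hc (hx c) (c.mem_supp_of_adj_mem_supp (hx c) hadj'))

lemma nonempty_embedding_of_nontrivial_components
    (hG : ∀ A : Set V, A.Finite → Autonomous G A → A.Subsingleton)
    (hclique : ¬ ∃ S : Set V, S.Infinite ∧ G.IsClique S) (hK : K.Finite)
    (hfin : ∀ c : (G.induce (commonNeighborSet G K)).ConnectedComponent, c.supp.Finite)
    (hcomp : {c : (G.induce (commonNeighborSet G K)).ConnectedComponent |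
      c.supp.Nontrivial}.Infinite) :
    Nonempty (G0 ↪g G) ∨ Nonempty (G1 ↪g G) ∨ Nonempty (G3 ↪g G) := by
  set H := G.induce (commonNeighborSet G K)
  have hsplit (n : ℕ) := exists_adj_split_of_not_autonomous
    (c := (hcomp.natEmbedding _ n : H.ConnectedComponent)) fun hauto =>
      (hcomp.natEmbedding _ n).2.not_subsingleton <|
        Set.subsingleton_of_image Subtype.val_injective _ (hG _ ((hfin _).image _) hauto)
  choose p hp q hq d hd hpq hdp hdq using hsplit
  have hdisj {m n : ℕ} {v w} (hv : v ∈ (hcomp.natEmbedding _ m).1.supp)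
      (hw : w ∈ (hcomp.natEmbedding _ n).1.supp) (hvw : H.Adj v w) : m = n :=
    (hcomp.natEmbedding _).injective <| Subtype.ext <|
      SimpleGraph.ConnectedComponent.eq_of_common_vertex
        (SimpleGraph.ConnectedComponent.mem_supp_of_adj_mem_supp _ hv hvw) hw
  refine nonempty_embedding_of_split_matching hclique hK (fun i => (p i).2) (fun i => (q i).2) hd
    ⟨fun i j hij => ?_, fun i j hij => ?_, fun i j => ⟨hdisj (hp i) (hq j), ?_⟩⟩ hdp hdq
  · obtain rfl := hdisj (hp i) (hp j) hij
    exact G.irrefl hij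
  · obtain rfl := hdisj (hq i) (hq j) hij
    exact G.irrefl hij
  · rintro rfl
    exact hpq i

end Unavoidable

theorem infinite_prime_graph_embeds_general {V : Type*} [Infinite V] (G : SimpleGraph V)
    (hG : ∀ A : Set V, A.Finite → Autonomous G A → A.Subsingleton)
    (hclique : ¬ ∃ S : Set V, S.Infinite ∧ G.IsClique S) :
    Nonempty (G0 ↪g G) ∨ Nonempty (G1 ↪g G) ∨ Nonempty (G2 ↪g G) ∨ Nonempty (G3 ↪g G) := by
  obtain ⟨K, hK, hW, hlf⟩ := exists_locallyFinite_commonNeighborSet hclique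
  by_cases hfin : ∀ c : (G.induce (commonNeighborSet G K)).ConnectedComponent, c.supp.Finite
  · have : Infinite (commonNeighborSet G K) := hW.to_subtype
    have : Infinite (G.induce (commonNeighborSet G K)).ConnectedComponent :=
      infinite_connectedComponent_of_finite_supp hfin
    have h013 : Nonempty (G0 ↪g G) ∨ Nonempty (G1 ↪g G) ∨ Nonempty (G3 ↪g G) := by
      by_cases htriv : {c : (G.induce (commonNeighborSet G K)).ConnectedComponent |
          c.supp.Subsingleton}.Finite
      · exact nonempty_embedding_of_nontrivial_components hG hclique hK hfin
          (htriv.infinite_compl.mono fun _ => Set.not_subsingleton_iff.1)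
      · exact nonempty_embedding_of_trivial_components
          (fun s t h => hG _ (Set.toFinite _) h (by simp) (by simp)) hclique hK htriv
    tauto
  · push Not at hfin
    obtain ⟨c, hc⟩ := hfin
    obtain ⟨e⟩ := nonempty_G2_embedding_of_infinite_component hlf hc
    exact .inr (.inr (.inl ⟨(SimpleGraph.Embedding.induce _).comp e⟩))

/-- Every infinite prime graph with no infinite clique contains an induced
subgraph isomorphic to one of `G0`, `G1`, `G2`, `G3`. -/
theorem infinite_prime_graph_embeds {V : Type*} [Infinite V] (G : SimpleGraph V)
    (hprime : PrimeGraph G)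
    (hclique : ¬ ∃ S : Set V, S.Infinite ∧ G.IsClique S) :
    Nonempty (G0 ↪g G) ∨ Nonempty (G1 ↪g G) ∨ Nonempty (G2 ↪g G) ∨ Nonempty (G3 ↪g G) :=
  infinite_prime_graph_embeds_general G (fun _ => hprime.subsingleton_of_finite) hclique
end

section
/- Let G be an infinite prime graph. If every chain in the neighborhood lattice N̂(G) is finite, then G contains an induced subgraph isomorphic to G2 or to G3. -/
set_option autoImplicit false

/-- The neighborhood lattice of a graph: all intersections of neighborhoods
(the whole vertex set being the empty intersection), ordered by inclusion. -/
def nhdLattice {V : Type*} (G : SimpleGraph V) : Set (Set V) :=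
  {X | ∃ S : Set V, X = ⋂ x ∈ S, G.neighborSet x}

/-!
By the descending chain condition there is a minimal member of `nhdLattice G` among those containing
infinitely many terms of a given family; the terms in it form an infinite subfamily such that every
vertex is adjacent to all of it or to only finitely many of its terms. Take a half spider: a center
with infinitely many legs of length two, no knee adjacent to the foot of a later leg. Applied to its
knees and then to its feet, this thins it to an induced `G3`; so assume that there are no half
spiders.

Applied to all vertices, it gives an infinite set `X` such that every vertex of `Y = {y | y misses
some vertex of X}` is adjacent to finitely many vertices of `X`. If some component of `G[Y]`
contains infinitely many vertices of `X`, follow geodesics towards `X` from a root: either they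
can be continued forever, giving a ray `G2`, or they branch infinitely at some vertex, giving a
half spider. Otherwise infinitely many components meet `X`. By primality all but at most one of
them are split by a vertex outside `Y`, because the union of two unsplit ones is autonomous; and
each vertex splits only finitely many components, again for lack of a half spider. Choosing
splitting vertices one after the other then produces an infinite descending chain in `nhdLattice
G`.
-/

open Set Function SimpleGraph

section

variable {V W : Type*} {G : SimpleGraph V} {H : SimpleGraph W}

theorem exists_seq_of_forall_finite_not {α : Type*} {J : Set α} (hJ : J.Infinite)
    {r : α → α → Prop} (hr : ∀ i ∈ J, {j ∈ J | ¬ r i j}.Finite) :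
    ∃ f : ℕ → α, (∀ n, f n ∈ J) ∧ ∀ m n, m < n → r (f m) (f n) := by
  refine exists_seq_of_forall_finset_exists (· ∈ J) r fun s hs => ?_
  have hbad : (⋃ i ∈ s, {j ∈ J | ¬ r i j}).Finite :=
    s.finite_toSet.biUnion fun i hi => hr i (hs i hi)
  obtain ⟨j, hj, hgood⟩ := (hJ.sdiff hbad).nonempty
  refine ⟨j, hj, fun i hi => ?_⟩
  by_contra hij
  exact hgood (mem_biUnion (Finset.mem_coe.2 hi) ⟨hj, hij⟩)

/-! ### The descending chain condition in the neighborhood lattice -/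

theorem univ_mem_nhdLattice : univ ∈ nhdLattice G :=
  ⟨∅, by simp⟩

theorem inter_neighborSet_mem_nhdLattice {X : Set V} (hX : X ∈ nhdLattice G) (y : V) :
    X ∩ G.neighborSet y ∈ nhdLattice G := by
  obtain ⟨S, rfl⟩ := hX
  exact ⟨insert y S, by rw [biInter_insert, inter_comm]⟩

theorem isWF_nhdLattice_of_finite_chains
    (hchain : ∀ C : Set (Set V), C ⊆ nhdLattice G → IsChain (· ⊆ ·) C → C.Finite) :
    (nhdLattice G).IsWF :=
  isWF_iff_no_descending_seq.2 fun _ hf hmem =>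
    infinite_range_of_injective hf.injective <|
      hchain _ (range_subset_iff.2 hmem) hf.antitone.isChain_range

theorem exists_infinite_subset_forall_adj_or_finite (hwf : (nhdLattice G).IsWF)
    {ι : Type*} (z : ι → V) {J : Set ι} (hJ : J.Infinite) :
    ∃ J' ⊆ J, J'.Infinite ∧
      ∀ y, (∀ i ∈ J', G.Adj y (z i)) ∨ {i ∈ J' | G.Adj y (z i)}.Finite := by
  obtain ⟨X, ⟨hX, hinf⟩, hmin⟩ :=
    (hwf.mono (sep_subset _ fun X => (J ∩ z ⁻¹' X).Infinite)).exists_minimal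
      ⟨univ, univ_mem_nhdLattice, by simpa using hJ⟩
  refine ⟨J ∩ z ⁻¹' X, inter_subset_left, hinf, fun y => ?_⟩
  by_contra! ⟨⟨i, hi, hyi⟩, hy⟩
  have hX_le : X ⊆ X ∩ G.neighborSet y :=
    hmin ⟨inter_neighborSet_mem_nhdLattice hX y, hy.mono fun j hj => ⟨hj.1.1, hj.1.2, hj.2⟩⟩
      inter_subset_left
  exact hyi (hX_le hi.2).2

theorem not_isWF_nhdLattice_of_halfGraph {s q : ℕ → V}
    (hadj : ∀ m n, m < n → G.Adj (s m) (q n)) (hnadj : ∀ n, ¬ G.Adj (s n) (q n)) :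
    ¬ (nhdLattice G).IsWF := by
  intro hwf
  refine isWF_iff_no_descending_seq.1 hwf (fun n => ⋂ x ∈ s '' Iio n, G.neighborSet x)
    (strictAnti_nat_of_succ_lt fun n => ⟨?_, fun hle => ?_⟩) fun n => ⟨_, rfl⟩
  · exact biInter_subset_biInter_left (image_mono (Iio_subset_Iio n.le_succ))
  · have hq : q n ∈ ⋂ x ∈ s '' Iio n, G.neighborSet x := by
      simpa using fun m hm => hadj m n hm
    exact hnadj n (mem_iInter₂.1 (hle hq) (s n) (mem_image_of_mem s n.lt_succ_self))

/-! ### Half spiders and `G3` -/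

/-- A half spider: infinitely many legs `center - knee i - foot i` of length two, where no knee is
adjacent to the foot of a *later* leg. Adjacencies from a knee to an earlier foot, among knees and
among feet are left free; when `nhdLattice G` is well-founded, passing to a subsequence of legs
removes them. -/
structure HalfSpider (G : SimpleGraph V) where
  center : V
  knee : ℕ → V
  foot : ℕ → V
  adj_center_knee : ∀ i, G.Adj center (knee i)
  not_adj_center_foot : ∀ i, ¬ G.Adj center (foot i)
  adj_knee_foot : ∀ i, G.Adj (knee i) (foot i)
  not_adj_knee_foot : ∀ i j, i < j → ¬ G.Adj (knee i) (foot j)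

/-- The image of a half spider under an embedding onto an induced subgraph. -/
def HalfSpider.map (φ : H ↪g G) (S : HalfSpider H) : HalfSpider G where
  center := φ S.center
  knee := φ ∘ S.knee
  foot := φ ∘ S.foot
  adj_center_knee i := φ.map_adj_iff.2 (S.adj_center_knee i)
  not_adj_center_foot i := φ.map_adj_iff.not.2 (S.not_adj_center_foot i)
  adj_knee_foot i := φ.map_adj_iff.2 (S.adj_knee_foot i)
  not_adj_knee_foot i j hij := φ.map_adj_iff.not.2 (S.not_adj_knee_foot i j hij)

theorem injective_of_adj_iff_of_injective_neighborSet {f : V → W}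
    (hG : Injective G.neighborSet) (hf : ∀ x y, H.Adj (f x) (f y) ↔ G.Adj x y) : Injective f :=
  fun x y hxy => hG <| Set.ext fun w => by
    rw [mem_neighborSet, mem_neighborSet, ← hf, ← hf, hxy]

theorem injective_neighborSet_G3 : Injective G3.neighborSet := by
  intro x y h
  have h' : ∀ w, G3.Adj x w ↔ G3.Adj y w := fun w => Set.ext_iff.1 h w
  rcases x with _ | i | i <;> rcases y with _ | j | j
  · rfl
  · simpa [G3] using h' (some (.inr (j + 1)))
  · simpa [G3] using h' none
  · simpa [G3] using h' (some (.inr (i + 1)))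
  · simpa [G3, eq_comm] using h' (some (.inr i))
  · simpa [G3] using h' none
  · simpa [G3] using h' none
  · simpa [G3] using h' none
  · simpa [G3, eq_comm] using h' (some (.inl i))

theorem nonempty_G3_embedding_of_adj_iff {c : V} {a b : ℕ → V}
    (hca : ∀ i, ¬ G.Adj c (a i)) (hcb : ∀ i, G.Adj c (b i))
    (hba : ∀ i j, G.Adj (b i) (a j) ↔ i = j)
    (haa : ∀ i j, ¬ G.Adj (a i) (a j)) (hbb : ∀ i j, ¬ G.Adj (b i) (b j)) :
    Nonempty (G3 ↪g G) := by
  let f : Option (ℕ ⊕ ℕ) → V := fun o => o.elim c (Sum.elim a b)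
  have hf : ∀ x y, G.Adj (f x) (f y) ↔ G3.Adj x y := by
    rintro (_ | i | i) (_ | j | j) <;>
      simp [f, G3, hca, hcb, hba, haa, hbb, G.adj_comm (a _), G.adj_comm _ c, eq_comm]
  exact ⟨⟨⟨f, injective_of_adj_iff_of_injective_neighborSet injective_neighborSet_G3 hf⟩,
    hf _ _⟩⟩

theorem not_adj_of_forall_lt {a : ℕ → V} (ha : ∀ i j, i < j → ¬ G.Adj (a i) (a j)) (i j : ℕ) :
    ¬ G.Adj (a i) (a j) := by
  rcases lt_trichotomy i j with hij | rfl | hij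
  · exact ha i j hij
  · exact G.irrefl
  · exact fun h => ha j i hij h.symm

theorem HalfSpider.exists_thinning (S : HalfSpider G) (hwf : (nhdLattice G).IsWF) :
    ∃ f : ℕ → ℕ, ∀ m n, m < n → f m < f n ∧ ¬ G.Adj (S.knee (f m)) (S.knee (f n)) ∧
      ¬ G.Adj (S.foot (f m)) (S.foot (f n)) ∧ ¬ G.Adj (S.foot (f m)) (S.knee (f n)) := by
  obtain ⟨J, -, hJ, hknee⟩ :=
    exists_infinite_subset_forall_adj_or_finite hwf S.knee infinite_univ
  obtain ⟨i₀, hi₀⟩ := hJ.nonempty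
  obtain ⟨J', hJ'sub, hJ', hfoot⟩ :=
    exists_infinite_subset_forall_adj_or_finite hwf S.foot (hJ.sdiff (finite_Iic i₀))
  obtain ⟨f, -, hf⟩ := exists_seq_of_forall_finite_not hJ' (r := fun i j => i < j ∧
      ¬ G.Adj (S.knee i) (S.knee j) ∧ ¬ G.Adj (S.foot i) (S.foot j) ∧
      ¬ G.Adj (S.foot i) (S.knee j)) fun i hi => by
    have hkk : {j ∈ J | G.Adj (S.knee i) (S.knee j)}.Finite :=
      (hknee _).resolve_left fun h => G.irrefl (h i (hJ'sub hi).1)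
    have hff : {j ∈ J' | G.Adj (S.foot i) (S.foot j)}.Finite :=
      (hfoot _).resolve_left fun h => G.irrefl (h i hi)
    have hfk : {j ∈ J | G.Adj (S.foot i) (S.knee j)}.Finite :=
      (hknee _).resolve_left fun h =>
        S.not_adj_knee_foot i₀ i (not_le.1 (hJ'sub hi).2) (h i₀ hi₀).symm
    refine ((finite_Iic i).union (hkk.union (hff.union hfk))).subset ?_
    rintro j ⟨hj, hij⟩
    have hjJ : j ∈ J := (hJ'sub hj).1
    simp only [mem_union, mem_Iic, mem_sep_iff, hj, hjJ, true_and]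
    by_contra! hgood
    exact hij hgood
  exact ⟨f, hf⟩

theorem HalfSpider.nonempty_G3_embedding (S : HalfSpider G) (hwf : (nhdLattice G).IsWF) :
    Nonempty (G3 ↪g G) := by
  obtain ⟨f, hf⟩ := S.exists_thinning hwf
  refine nonempty_G3_embedding_of_adj_iff (c := S.center) (a := S.foot ∘ f) (b := S.knee ∘ f)
    (fun i => S.not_adj_center_foot _) (fun i => S.adj_center_knee _) (fun i j => ?_)
    (not_adj_of_forall_lt fun i j hij => (hf i j hij).2.2.1)
    (not_adj_of_forall_lt fun i j hij => (hf i j hij).2.1)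
  constructor
  · intro h
    by_contra hij
    rcases lt_or_gt_of_ne hij with hij | hij
    · exact S.not_adj_knee_foot _ _ (hf i j hij).1 h
    · exact (hf j i hij).2.2.2 h.symm
  · rintro rfl
    exact S.adj_knee_foot _

/-! ### Geodesic rays -/

/-- `G2` is the Hasse diagram of `ℕ`: the vertex `b_i` is numbered `2 * i` and `a_i` is numbered
`2 * i + 1`. -/
def G2IsoHasse : G2 ≃g hasse ℕ where
  toEquiv := (Equiv.sumComm ℕ ℕ).trans Equiv.natSumNatEquivNat
  map_rel_iff' := by
    rintro (i | i) (j | j) <;> simp [G2] <;> omega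

theorem nonempty_hasse_embedding_of_geodesic (hconn : H.Connected) {r : W} {v : ℕ → W}
    (hdist : ∀ n, H.dist r (v n) = n) (hadj : ∀ n, H.Adj (v n) (v (n + 1))) :
    Nonempty (hasse ℕ ↪g H) := by
  have hinj : Injective v := fun m n h => by rw [← hdist m, h, hdist n]
  have hle : ∀ {m n}, H.Adj (v m) (v n) → n ≤ m + 1 := fun {m n} h => by
    simpa [hdist, dist_eq_one_iff_adj.2 h] using hconn.dist_triangle (u := r) (v := v m) (w := v n)
  refine ⟨⟨⟨v, hinj⟩, fun {m n} => ⟨fun h => ?_, ?_⟩⟩⟩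
  · have hne : m ≠ n := fun hmn => h.ne (congrArg v hmn)
    have hmn := hle h
    have hnm := hle h.symm
    simp only [hasse_adj, Nat.covBy_iff_add_one_eq]
    omega
  · simp only [hasse_adj, Nat.covBy_iff_add_one_eq]
    rintro (rfl | rfl)
    · exact hadj _
    · exact (hadj _).symm

theorem exists_adj_dist_eq_add_one (hconn : H.Connected) {v u : W} (hvu : v ≠ u) :
    ∃ z, H.Adj v z ∧ H.dist v u = H.dist z u + 1 := by
  obtain ⟨p, hp⟩ := hconn.exists_walk_length_eq_dist v u
  cases p with
  | nil => exact absurd rfl hvu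
  | @cons _ z _ hvz q =>
    have hq := dist_le q
    have htri := hconn.dist_triangle (u := v) (v := z) (w := u)
    rw [dist_eq_one_iff_adj.2 hvz] at htri
    rw [Walk.length_cons] at hp
    exact ⟨z, hvz, by omega⟩

/-- The vertices `u` such that some geodesic from `r` to `u` passes through `v`. This reading is
only valid in a connected graph, as `dist` is `0` between unreachable vertices. -/
def geodesicShadow (H : SimpleGraph W) (r v : W) : Set W :=
  {u | H.dist r u = H.dist r v + H.dist v u}

theorem geodesicShadow_self (r : W) : geodesicShadow H r r = univ := by
  simp [geodesicShadow]

theorem exists_adj_mem_geodesicShadow (hconn : H.Connected) {r v u : W}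
    (hu : u ∈ geodesicShadow H r v) (hne : v ≠ u) :
    ∃ z, H.Adj v z ∧ H.dist r z = H.dist r v + 1 ∧ u ∈ geodesicShadow H r z := by
  obtain ⟨z, hvz, hz⟩ := exists_adj_dist_eq_add_one hconn hne
  have hrz := hconn.dist_triangle (u := r) (v := v) (w := z)
  have hru := hconn.dist_triangle (u := r) (v := z) (w := u)
  rw [dist_eq_one_iff_adj.2 hvz] at hrz
  simp only [geodesicShadow, mem_ofPred_eq] at hu ⊢
  exact ⟨z, hvz, by omega, by omega⟩

theorem geodesicShadow_subset_of_adj (hconn : H.Connected) {r z w : W} (hzw : H.Adj z w)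
    (hdist : H.dist r w = H.dist r z + 1) : geodesicShadow H r w ⊆ geodesicShadow H r z := by
  intro u hu
  have hzu := hconn.dist_triangle (u := z) (v := w) (w := u)
  have hru := hconn.dist_triangle (u := r) (v := z) (w := u)
  rw [dist_eq_one_iff_adj.2 hzw] at hzu
  simp only [geodesicShadow, mem_ofPred_eq] at hu ⊢
  omega

theorem nonempty_halfSpider_of_finite_geodesicShadow (hconn : H.Connected) {U : Set W} {r v : W}
    (hUv : {u ∈ U | H.Adj v u}.Finite) (hinf : (U ∩ geodesicShadow H r v).Infinite)
    (hfin : ∀ z, H.Adj v z → H.dist r z = H.dist r v + 1 → (U ∩ geodesicShadow H r z).Finite) :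
    Nonempty (HalfSpider H) := by
  obtain ⟨f, hf, hlt⟩ := exists_seq_of_forall_finset_exists
    (fun t : W × W => (H.Adj v t.1 ∧ H.dist r t.1 = H.dist r v + 1) ∧
      H.Adj t.1 t.2 ∧ H.dist r t.2 = H.dist r v + 2)
    (fun t t' => ¬ H.Adj t.1 t'.2) fun s hs => by
      have hcovered : (⋃ t ∈ s, U ∩ geodesicShadow H r t.1).Finite :=
        s.finite_toSet.biUnion fun t ht => hfin t.1 (hs t ht).1.1 (hs t ht).1.2
      obtain ⟨u, ⟨huU, hu⟩, hu'⟩ :=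
        (hinf.sdiff ((hcovered.union hUv).union (finite_singleton v))).nonempty
      simp only [mem_union, mem_iUnion, mem_inter_iff, mem_sep_iff, mem_singleton_iff, huU,
        true_and, exists_prop, not_or, not_exists, not_and] at hu'
      obtain ⟨⟨huncovered, hvu⟩, hne⟩ := hu'
      obtain ⟨z, hvz, hz, huz⟩ := exists_adj_mem_geodesicShadow hconn hu (Ne.symm hne)
      obtain ⟨w, hzw, hw, huw⟩ :=
        exists_adj_mem_geodesicShadow hconn huz fun hzu => hvu (hzu ▸ hvz)
      -- An earlier `t.1` adjacent to `w` would have `u` in its shadow.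
      refine ⟨(z, w), ⟨⟨hvz, hz⟩, hzw, by simp only [hw, hz]⟩, fun t ht htw => ?_⟩
      refine huncovered t ht (geodesicShadow_subset_of_adj hconn htw ?_ huw)
      rw [hw, hz, (hs t ht).1.2]
  refine ⟨⟨v, fun n => (f n).1, fun n => (f n).2, fun n => (hf n).1.1, fun n hadj => ?_,
    fun n => (hf n).2.1, hlt⟩⟩
  have htri := hconn.dist_triangle (u := r) (v := v) (w := (f n).2)
  rw [dist_eq_one_iff_adj.2 hadj, (hf n).2.2] at htri
  omega

theorem nonempty_hasse_embedding_or_halfSpider (hconn : H.Connected) {U : Set W}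
    (hinf : U.Infinite) (hU : ∀ y, {u ∈ U | H.Adj y u}.Finite) :
    Nonempty (hasse ℕ ↪g H) ∨ Nonempty (HalfSpider H) := by
  refine or_iff_not_imp_right.2 fun hS => ?_
  obtain ⟨r, -⟩ := hinf.nonempty
  have hstep : ∀ v : {v // (U ∩ geodesicShadow H r v).Infinite},
      ∃ z : {v // (U ∩ geodesicShadow H r v).Infinite},
        H.Adj v z ∧ H.dist r z = H.dist r v + 1 := by
    rintro ⟨v, hv⟩
    by_contra! hstuck
    exact hS <| nonempty_halfSpider_of_finite_geodesicShadow hconn (hU v) hv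
      fun z hvz hz => not_infinite.1 fun hzinf => hstuck ⟨z, hzinf⟩ hvz hz
  choose next hadj hdist using hstep
  let v : ℕ → {v // (U ∩ geodesicShadow H r v).Infinite} :=
    fun n => next^[n] ⟨r, by rwa [geodesicShadow_self, inter_univ]⟩
  have hv : ∀ n, v (n + 1) = next (v n) := fun n => iterate_succ_apply' next n _
  refine nonempty_hasse_embedding_of_geodesic hconn (r := r) (v := fun n => v n)
    (fun n => ?_) fun n => hv n ▸ hadj (v n)
  induction n with
  | zero => exact dist_self
  | succ n ih => rw [hv, hdist, ih]

/-! ### Components of an induced subgraph -/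

section Components

variable {X Y : Set V}

/-- The vertex set in `V` of a connected component of the induced subgraph on `Y`. -/
def componentVerts (c : (G.induce Y).ConnectedComponent) : Set V :=
  (↑) '' c.supp

theorem mem_componentVerts_mk {y : V} (hy : y ∈ Y) :
    y ∈ componentVerts ((G.induce Y).connectedComponentMk ⟨y, hy⟩) :=
  ⟨⟨y, hy⟩, rfl, rfl⟩

theorem nonempty_componentVerts (c : (G.induce Y).ConnectedComponent) :
    (componentVerts c).Nonempty :=
  c.nonempty_supp.image _

theorem mem_componentVerts_of_adj {c : (G.induce Y).ConnectedComponent} {a y : V}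
    (ha : a ∈ componentVerts c) (hy : y ∈ Y) (hadj : G.Adj a y) : y ∈ componentVerts c := by
  obtain ⟨a, ha, rfl⟩ := ha
  exact ⟨⟨y, hy⟩, c.mem_supp_of_adj_mem_supp ha hadj, rfl⟩

theorem eq_of_mem_componentVerts {c c' : (G.induce Y).ConnectedComponent} {a : V}
    (ha : a ∈ componentVerts c) (ha' : a ∈ componentVerts c') : c = c' := by
  obtain ⟨a, ha, rfl⟩ := ha
  obtain ⟨_, ha', h⟩ := ha'
  exact ConnectedComponent.eq_of_common_vertex ha (Subtype.ext h ▸ ha')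

/-- The inclusion into `G` of a connected component of `G.induce Y`. -/
def componentEmbedding (c : (G.induce Y).ConnectedComponent) : c.toSimpleGraph ↪g G :=
  (Embedding.induce c.supp).trans (Embedding.induce Y)

theorem nonempty_G2_embedding_or_halfSpider_of_infinite_inter
    (hfin : ∀ y ∈ Y, {x ∈ X | G.Adj y x}.Finite) {c : (G.induce Y).ConnectedComponent}
    (hinf : (X ∩ componentVerts c).Infinite) :
    Nonempty (G2 ↪g G) ∨ Nonempty (HalfSpider G) := by
  let φ := componentEmbedding c
  have hX : (φ ⁻¹' X).Infinite := by
    refine Infinite.of_image φ (hinf.mono ?_)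
    rintro _ ⟨hx, y, hy, rfl⟩
    exact ⟨⟨y, hy⟩, hx, rfl⟩
  have hfinite : ∀ y, {u ∈ φ ⁻¹' X | c.toSimpleGraph.Adj y u}.Finite := fun y =>
    ((hfin (φ y) y.1.2).preimage φ.injective.injOn).subset
      fun u hu => ⟨hu.1, φ.map_adj_iff.2 hu.2⟩
  exact (nonempty_hasse_embedding_or_halfSpider c.connected_toSimpleGraph hX hfinite).imp
    (fun ⟨ray⟩ => ⟨φ.comp (ray.comp G2IsoHasse.toEmbedding)⟩) fun ⟨S⟩ => ⟨S.map φ⟩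

theorem infinite_setOf_inter_componentVerts_nonempty (hX : X.Infinite) (hXY : X ⊆ Y)
    (hfin : ∀ c : (G.induce Y).ConnectedComponent, (X ∩ componentVerts c).Finite) :
    {c : (G.induce Y).ConnectedComponent | (X ∩ componentVerts c).Nonempty}.Infinite := by
  refine fun hC => hX ((hC.biUnion fun c _ => hfin c).subset fun x hx => ?_)
  have hxc := mem_componentVerts_mk (G := G) (hXY hx)
  exact mem_biUnion (show _ ∈ {c | _} from ⟨x, hx, hxc⟩) ⟨hx, hxc⟩

theorem autonomous_of_forall_adj {A : Set V} (hclosed : ∀ a ∈ A, ∀ y ∈ Y, G.Adj a y → y ∈ A)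
    (hadj : ∀ s ∉ Y, ∀ a ∈ A, G.Adj s a) : Autonomous G A := by
  intro v hv
  by_cases hvY : v ∈ Y
  · exact Or.inr fun a ha hva => hv (hclosed a ha v hvY hva.symm)
  · exact Or.inl (hadj v hvY)

theorem subsingleton_unsplit_components (hprime : PrimeGraph G)
    [Infinite (G.induce Y).ConnectedComponent] :
    {c : (G.induce Y).ConnectedComponent |
      ∀ s ∉ Y, ∀ a ∈ componentVerts c, G.Adj s a}.Subsingleton := by
  intro c hc c' hc'
  by_contra hne
  have haut : Autonomous G (componentVerts c ∪ componentVerts c') :=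
    autonomous_of_forall_adj
      (fun a ha y hy hay => ha.imp (mem_componentVerts_of_adj · hy hay)
        (mem_componentVerts_of_adj · hy hay))
      fun s hs a ha => ha.elim (hc s hs a) (hc' s hs a)
  obtain ⟨p, hp⟩ := nonempty_componentVerts c
  obtain ⟨p', hp'⟩ := nonempty_componentVerts c'
  rcases hprime.2 _ haut with hempty | ⟨x, hx⟩ | huniv
  · exact (hempty ▸ Or.inl hp : p ∈ (∅ : Set V))
  · have hpx : p ∈ ({x} : Set V) := hx ▸ Or.inl hp
    have hpx' : p' ∈ ({x} : Set V) := hx ▸ Or.inr hp'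
    rw [mem_singleton_iff] at hpx hpx'
    exact hne (eq_of_mem_componentVerts (hpx ▸ hp) (hpx' ▸ hp'))
  · obtain ⟨d, hd⟩ := (toFinite {c, c'}).exists_notMem
    obtain ⟨x, hx⟩ := nonempty_componentVerts d
    have hmem : x ∈ componentVerts c ∪ componentVerts c' := huniv ▸ mem_univ x
    exact hd (hmem.imp (eq_of_mem_componentVerts hx) (eq_of_mem_componentVerts hx))

theorem exists_adj_boundary_of_componentVerts {c : (G.induce Y).ConnectedComponent} {s : V}
    (hadj : ∃ p ∈ componentVerts c, G.Adj s p) (hnadj : ∃ q ∈ componentVerts c, ¬ G.Adj s q) :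
    ∃ p ∈ componentVerts c, ∃ q ∈ componentVerts c, G.Adj p q ∧ G.Adj s p ∧ ¬ G.Adj s q := by
  obtain ⟨_, ⟨p, hp, rfl⟩, hsp⟩ := hadj
  obtain ⟨_, ⟨q, hq, rfl⟩, hsq⟩ := hnadj
  obtain ⟨walk⟩ := c.connected_toSimpleGraph.preconnected ⟨p, hp⟩ ⟨q, hq⟩
  obtain ⟨d, -, hfst, hsnd⟩ := walk.exists_boundary_dart {x | G.Adj s x.1.1} hsp hsq
  exact ⟨_, mem_image_of_mem _ d.fst.2, _, mem_image_of_mem _ d.snd.2, d.adj, hfst, hsnd⟩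

theorem finite_split_components (hS : IsEmpty (HalfSpider G)) (s : V) :
    {c : (G.induce Y).ConnectedComponent | (∃ p ∈ componentVerts c, G.Adj s p) ∧
      ∃ q ∈ componentVerts c, ¬ G.Adj s q}.Finite := by
  refine not_infinite.1 fun hinf => ?_
  let c := hinf.natEmbedding
  choose p hp q hq hpq hsp hsq using
    fun n => exists_adj_boundary_of_componentVerts (c n).2.1 (c n).2.2
  refine hS.false ⟨s, p, q, hsp, hsq, hpq, fun i j hij hadj => hij.ne ?_⟩
  have hqY : q j ∈ Y := Subtype.coe_image_subset _ _ (hq j)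
  exact c.injective <| Subtype.ext <|
    eq_of_mem_componentVerts (mem_componentVerts_of_adj (hp i) hqY hadj) (hq j)

end Components

theorem not_isWF_nhdLattice_of_splitting {ι : Type*} {C : Set ι} (hC : C.Infinite)
    {D : ι → Set V} {S : Set V} (hsplit : ∀ c ∈ C, ∃ s ∈ S, ∃ q ∈ D c, ¬ G.Adj s q)
    (hfin : ∀ s ∈ S, {c ∈ C | ∃ q ∈ D c, ¬ G.Adj s q}.Finite) : ¬ (nhdLattice G).IsWF := by
  have : Nonempty V := let ⟨c, hc⟩ := hC.nonempty; let ⟨s, _⟩ := hsplit c hc; ⟨s⟩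
  choose! s hs q hq hsq using hsplit
  obtain ⟨f, hf, hadj⟩ := exists_seq_of_forall_finite_not hC (r := fun c c' => G.Adj (s c) (q c'))
    fun c hc => (hfin (s c) (hs c hc)).subset fun c' hc' => ⟨hc'.1, q c', hq c' hc'.1, hc'.2⟩
  exact not_isWF_nhdLattice_of_halfGraph hadj fun n => hsq (f n) (hf n)

theorem infinite_prime_graph_finite_chains_general [Infinite V] (G : SimpleGraph V)
    (hprime : PrimeGraph G) (hwf : (nhdLattice G).IsWF) :
    Nonempty (G2 ↪g G) ∨ Nonempty (G3 ↪g G) := by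
  by_contra! ⟨hG2, hG3⟩
  have hS : IsEmpty (HalfSpider G) :=
    ⟨fun S => not_isEmpty_iff.2 (S.nonempty_G3_embedding hwf) hG3⟩
  obtain ⟨X, -, hX, hadj_or_finite⟩ :=
    exists_infinite_subset_forall_adj_or_finite hwf id infinite_univ
  let Y : Set V := {y | ¬ ∀ x ∈ X, G.Adj y x}
  have hXY : X ⊆ Y := fun x hx h => G.irrefl (h x hx)
  have hfin : ∀ c : (G.induce Y).ConnectedComponent, (X ∩ componentVerts c).Finite := fun c =>
    not_infinite.1 fun hinf =>
      (nonempty_G2_embedding_or_halfSpider_of_infinite_inter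
        (fun y hy => (hadj_or_finite y).resolve_left hy) hinf).elim
        (not_nonempty_iff.2 hG2) (not_nonempty_iff.2 hS)
  have hmeet := infinite_setOf_inter_componentVerts_nonempty hX hXY hfin
  have : Infinite (G.induce Y).ConnectedComponent :=
    infinite_univ_iff.1 (hmeet.mono (subset_univ _))
  have hsplit := hmeet.sdiff (subsingleton_unsplit_components hprime).finite
  refine not_isWF_nhdLattice_of_splitting hsplit (D := componentVerts) (S := Yᶜ)
    (fun c hc => by simpa using hc.2) (fun s hs => ?_) hwf
  refine (finite_split_components hS s).subset fun c hc => ⟨?_, hc.2⟩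
  obtain ⟨x, hx, hxc⟩ := hc.1.1
  exact ⟨x, hxc, not_not.1 hs x hx⟩

end

/-- If `G` is an infinite prime graph all of whose chains in the neighborhood
lattice are finite, then `G` embeds `G2` or `G3`. -/
theorem infinite_prime_graph_finite_chains {V : Type*} [Infinite V]
    (G : SimpleGraph V) (hprime : PrimeGraph G)
    (hchain : ∀ C : Set (Set V), C ⊆ nhdLattice G → IsChain (· ⊆ ·) C → C.Finite) :
    Nonempty (G2 ↪g G) ∨ Nonempty (G3 ↪g G) :=
  infinite_prime_graph_finite_chains_general G hprime (isWF_nhdLattice_of_finite_chains hchain)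
end
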